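/- Let d ≥ 2, μ > −1, n ≥ 0, and let f be a polynomial in d variables of total degree at most n. Then ‖ (√(1−‖x‖²)/‖x‖) ⟨x,∇⟩f ‖²_{μ,2} + Σ_{1≤i<j≤d} ‖ ‖x‖^{−1} D_{i,j} f ‖²_{μ,2} ≤ n(n+2μ+d) ‖f‖²_{μ,2}, and equality holds if and only if f ∈ 𝒱_n(W_μ, B^d). -/

import Mathlib

/-!
Write `L p = ∫_{B^d} p (1-‖x‖²)^μ` and let `E = ⟨x,∇⟩` be the Euler operator. By Lagrange's
identity `‖x‖²|∇f|² = (E f)² + ∑_{i<j} (D_{ij} f)²`, the left side of the inequality is the energy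
`L (|∇f|² - (E f)²)` (`pointwise_identity`, `lhs_eq_ballFunctional`).

The only analytic facts needed about `L` are its positive definiteness on polynomials and the
integration by parts formula `L ((1-‖x‖²) ∂_i h) = 2(μ+1) L (x_i h)`
(`ballFunctional_parts`), which is Fubini plus the vanishing of `(1-‖x‖²)^(μ+1)` at the ends of
each chord. Since partial derivatives commute, this formula also yields the rotation invariance
`L (x_j ∂_i h) = L (x_i ∂_j h)`. Together they give Green's formula
`L (∇f·∇g - E f E g) = -L (𝒟f · g)` with `𝒟 = Δ - E² - (2μ+d)E` (`IsBallFunctional.energy`), so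
`𝒟` is symmetric. As `𝒟 + n(n+2μ+d)` lowers the degree of polynomials of degree at most `n`,
every element of `𝒱_n` is an eigenvector of `𝒟` with eigenvalue `-n(n+2μ+d)`
(`IsBallFunctional.eigen`). These eigenvalues are strictly monotone in `n`, and the claim follows
by splitting off orthogonal components one degree at a time (`IsBallFunctional.bernstein`).
-/

open MeasureTheory Real MvPolynomial Finset
open scoped ENNReal

noncomputable section

/-- The Euclidean norm of `x ∈ ℝ^d`. -/
def eunorm {d : ℕ} (x : Fin d → ℝ) : ℝ := Real.sqrt (∑ i, (x i) ^ 2)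

/-- The closed unit ball `B^d = {x : ‖x‖ ≤ 1}` in `ℝ^d` (Euclidean norm). -/
def Bd (d : ℕ) : Set (Fin d → ℝ) := {x | eunorm x ≤ 1}

/-- The metric `d_B(x,y) = arccos(⟨x,y⟩ + √(1-‖x‖²)√(1-‖y‖²))` on the unit ball. -/
def distB {d : ℕ} (x y : Fin d → ℝ) : ℝ :=
  Real.arccos ((∑ i, x i * y i) +
    Real.sqrt (1 - eunorm x ^ 2) * Real.sqrt (1 - eunorm y ^ 2))

/-- The metric ball `{y ∈ B^d : d_B(x,y) < r}`. -/
def ballB {d : ℕ} (x : Fin d → ℝ) (r : ℝ) : Set (Fin d → ℝ) :=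
  {y | y ∈ Bd d ∧ distB x y < r}

/-- `W` is a doubling weight on the unit ball `B^d` with respect to the metric `d_B`. -/
def IsDoublingBall (d : ℕ) (W : (Fin d → ℝ) → ℝ) : Prop :=
  ∃ L > (0 : ℝ), ∀ x ∈ Bd d, ∀ r : ℝ, 0 < r →
    ∫ y in ballB x (2 * r), W y ≤ L * ∫ y in ballB x r, W y

/-- The standard simplex `Δ^d = {x : x_i ≥ 0, x_1 + ⋯ + x_d ≤ 1}`. -/
def Td (d : ℕ) : Set (Fin d → ℝ) := {x | (∀ i, 0 ≤ x i) ∧ ∑ i, x i ≤ 1}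

/-- The metric `d_Δ(x,y) = arccos(Σ √(x_i y_i) + √((1-|x|)(1-|y|)))` on the simplex. -/
def distT {d : ℕ} (x y : Fin d → ℝ) : ℝ :=
  Real.arccos ((∑ i, Real.sqrt (x i * y i)) +
    Real.sqrt ((1 - ∑ i, x i) * (1 - ∑ i, y i)))

/-- The metric ball `{y ∈ Δ^d : d_Δ(x,y) < r}`. -/
def ballT {d : ℕ} (x : Fin d → ℝ) (r : ℝ) : Set (Fin d → ℝ) :=
  {y | y ∈ Td d ∧ distT x y < r}

/-- `W` is a doubling weight on the simplex `Δ^d` with respect to the metric `d_Δ`. -/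
def IsDoublingSimplex (d : ℕ) (W : (Fin d → ℝ) → ℝ) : Prop :=
  ∃ L > (0 : ℝ), ∀ x ∈ Td d, ∀ r : ℝ, 0 < r →
    ∫ y in ballT x (2 * r), W y ≤ L * ∫ y in ballT x r, W y

/-- Weighted `L^p` norm on the unit ball: for `p < ∞` it is
`(∫_{B^d} |f|^p W)^{1/p}`, and for `p = ∞` the sup norm on `B^d`. -/
def lpNormB (d : ℕ) (W : (Fin d → ℝ) → ℝ) (p : ℝ≥0∞) (f : (Fin d → ℝ) → ℝ) : ℝ :=
  if p = ⊤ then ⨆ x : Bd d, |f x.1|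
  else (∫ x in Bd d, |f x| ^ p.toReal * W x) ^ (1 / p.toReal)

/-- Weighted `L^p` norm on the simplex: for `p < ∞` it is
`(∫_{Δ^d} |f|^p W)^{1/p}`, and for `p = ∞` the sup norm on `Δ^d`. -/
def lpNormT (d : ℕ) (W : (Fin d → ℝ) → ℝ) (p : ℝ≥0∞) (f : (Fin d → ℝ) → ℝ) : ℝ :=
  if p = ⊤ then ⨆ x : Td d, |f x.1|
  else (∫ x in Td d, |f x| ^ p.toReal * W x) ^ (1 / p.toReal)

/-- Evaluation of a real polynomial in `d` variables at a point of `ℝ^d`. -/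
def evalP {d : ℕ} (f : MvPolynomial (Fin d) ℝ) (x : Fin d → ℝ) : ℝ :=
  MvPolynomial.eval x f

/-- The angular derivative `D_{i,j} = x_i ∂_j − x_j ∂_i` acting on polynomials. -/
def Dpoly {d : ℕ} (i j : Fin d) (f : MvPolynomial (Fin d) ℝ) : MvPolynomial (Fin d) ℝ :=
  X i * pderiv j f - X j * pderiv i f

/-- The classical weight `W_μ(x) = (1−‖x‖²)^μ` on the unit ball. -/
def Wmu (d : ℕ) (μ : ℝ) (x : Fin d → ℝ) : ℝ := (1 - eunorm x ^ 2) ^ μ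

/-- The squared weighted `L²(W_μ, B^d)` norm `‖f‖²_{μ,2} = ∫_{B^d} f² W_μ`. -/
def sqNormMu (d : ℕ) (μ : ℝ) (f : (Fin d → ℝ) → ℝ) : ℝ :=
  ∫ x in Bd d, (f x) ^ 2 * Wmu d μ x

/-- The weighted `L²(W_μ, B^d)` norm `‖f‖_{μ,2}`. -/
def normMu (d : ℕ) (μ : ℝ) (f : (Fin d → ℝ) → ℝ) : ℝ :=
  Real.sqrt (sqNormMu d μ f)

/-- `f ∈ 𝒱_n(W_μ, B^d)`: a polynomial of total degree at most `n`, orthogonal in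
`L²(W_μ, B^d)` to every polynomial of total degree less than `n`. -/
def memV (d : ℕ) (μ : ℝ) (n : ℕ) (f : MvPolynomial (Fin d) ℝ) : Prop :=
  f.totalDegree ≤ n ∧ ∀ g : MvPolynomial (Fin d) ℝ, g.totalDegree < n →
    ∫ x in Bd d, evalP f x * evalP g x * Wmu d μ x = 0

/-- The spectral operator `𝒟_μ` acting on polynomials. -/
def DmuP (d : ℕ) (μ : ℝ) (f : MvPolynomial (Fin d) ℝ) : MvPolynomial (Fin d) ℝ :=
  (∑ i, (1 - X i ^ 2) * pderiv i (pderiv i f))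
    - 2 * (∑ i, ∑ j ∈ Finset.Ioi i, X i * X j * pderiv i (pderiv j f))
    - C ((d : ℝ) + 2 * μ + 1) * ∑ i, X i * pderiv i f

/-- The partial derivative `∂_i` of a function on `ℝ^d`. -/
def pd {d : ℕ} (i : Fin d) (f : (Fin d → ℝ) → ℝ) (x : Fin d → ℝ) : ℝ :=
  fderiv ℝ f x (Pi.single i 1)

/-- `⟨x,∇⟩f(x) = Σ_i x_i ∂_i f(x)`. -/
def xgrad {d : ℕ} (f : (Fin d → ℝ) → ℝ) (x : Fin d → ℝ) : ℝ :=
  ∑ i, x i * pd i f x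

/-- The angular derivative `D_{i,j} = x_i ∂_j − x_j ∂_i` acting on functions. -/
def DijF {d : ℕ} (i j : Fin d) (f : (Fin d → ℝ) → ℝ) (x : Fin d → ℝ) : ℝ :=
  x i * pd j f x - x j * pd i f x

/-- The spectral operator `𝒟_μ` acting on functions. -/
def DmuF (d : ℕ) (μ : ℝ) (f : (Fin d → ℝ) → ℝ) (x : Fin d → ℝ) : ℝ :=
  (∑ i, (1 - x i ^ 2) * pd i (pd i f) x)
    - 2 * (∑ i, ∑ j ∈ Finset.Ioi i, x i * x j * pd i (pd j f) x)
    - ((d : ℝ) + 2 * μ + 1) * ∑ i, x i * pd i f x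


/-! ### Algebra of the spectral operator -/

section Algebra

variable {d : ℕ}

/-- The Euler operator `⟨x,∇⟩` on polynomials. -/
def eulerP (f : MvPolynomial (Fin d) ℝ) : MvPolynomial (Fin d) ℝ := ∑ i, X i * pderiv i f

/-- The Laplacian on polynomials. -/
def lapP (f : MvPolynomial (Fin d) ℝ) : MvPolynomial (Fin d) ℝ := ∑ i, pderiv i (pderiv i f)

/-- The polynomial `‖x‖²`. -/
def rsqP (d : ℕ) : MvPolynomial (Fin d) ℝ := ∑ i, X i ^ 2

/-- The spectral operator of the ball, written as `Δ - E² - (2μ+d) E` with `E` the Euler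
operator. -/
def specP (μ : ℝ) (f : MvPolynomial (Fin d) ℝ) : MvPolynomial (Fin d) ℝ :=
  lapP f - eulerP (eulerP f) - C (2 * μ + d) * eulerP f

/-- The polynomial `∇f·∇g - ⟨x,∇⟩f ⟨x,∇⟩g`, whose weighted integral is the energy form. -/
def gammaP (f g : MvPolynomial (Fin d) ℝ) : MvPolynomial (Fin d) ℝ :=
  (∑ i, pderiv i f * pderiv i g) - eulerP f * eulerP g

lemma pderiv_pderiv_comm (i j : Fin d) (h : MvPolynomial (Fin d) ℝ) :
    pderiv i (pderiv j h) = pderiv j (pderiv i h) := by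
  ext m
  simp only [coeff_pderiv]
  rw [add_right_comm]
  by_cases hij : i = j
  · subst hij; rfl
  · simp [hij, Ne.symm hij]; ring

lemma coeff_eulerP (m : Fin d →₀ ℕ) (f : MvPolynomial (Fin d) ℝ) :
    coeff m (eulerP f) = (m.degree : ℝ) * coeff m f := by
  classical
  induction f using MvPolynomial.induction_on' with
  | add p q hp hq =>
    have : eulerP (p + q) = eulerP p + eulerP q := by
      simp [eulerP, mul_add, Finset.sum_add_distrib]
    rw [this, coeff_add, hp, hq, coeff_add, mul_add]
  | monomial u a =>
    have : eulerP (monomial u a) = u.degree • monomial u a := 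
      (isHomogeneous_monomial a rfl).sum_X_mul_pderiv
    rw [this, coeff_smul, coeff_monomial]
    split_ifs with h
    · subst h; simp
    · simp

lemma coeff_lapP (m : Fin d →₀ ℕ) (f : MvPolynomial (Fin d) ℝ) {n : ℕ} (hf : f.totalDegree ≤ n)
    (hm : n < m.degree + 2) : coeff m (lapP f) = 0 := by
  rw [lapP, coeff_sum]
  refine Finset.sum_eq_zero fun i _ => ?_
  rw [coeff_pderiv, coeff_pderiv, coeff_eq_zero_of_totalDegree_lt]
  · simp
  · change _ < Finsupp.degree _
    simp
    omega

lemma totalDegree_lt_of_coeff {f : MvPolynomial (Fin d) ℝ} {n : ℕ} (hn : 0 < n)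
    (h : ∀ m : Fin d →₀ ℕ, n ≤ m.degree → coeff m f = 0) : f.totalDegree < n := by
  rw [totalDegree, Finset.sup_lt_iff (by simpa using hn)]
  intro m hm
  by_contra hc
  rw [mem_support_iff] at hm
  exact hm (h m (not_lt.mp hc))

lemma coeff_specP (μ : ℝ) (m : Fin d →₀ ℕ) (f : MvPolynomial (Fin d) ℝ) :
    coeff m (specP μ f) = coeff m (lapP f)
      - (m.degree : ℝ) * ((m.degree : ℝ) + 2 * μ + d) * coeff m f := by
  simp only [specP, coeff_sub, coeff_C_mul, coeff_eulerP]
  ring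

lemma totalDegree_specP_lt (μ : ℝ) {f : MvPolynomial (Fin d) ℝ} {n : ℕ}
    (hf : f.totalDegree < n) : (specP μ f).totalDegree < n := by
  refine totalDegree_lt_of_coeff (by omega) fun m hm => ?_
  have : coeff m f = 0 := coeff_eq_zero_of_totalDegree_lt (lt_of_lt_of_le hf hm)
  rw [coeff_specP, coeff_lapP m f le_rfl (by omega), this]
  simp

lemma totalDegree_specP_add_lt (μ : ℝ) {f : MvPolynomial (Fin d) ℝ} {n : ℕ} (hn : 0 < n)
    (hf : f.totalDegree ≤ n) :
    (specP μ f + C ((n : ℝ) * (n + 2 * μ + d)) * f).totalDegree < n := by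
  refine totalDegree_lt_of_coeff hn fun m hm => ?_
  rw [coeff_add, coeff_specP, coeff_lapP m f hf (by omega), coeff_C_mul]
  rcases hm.eq_or_lt with h | h
  · rw [← h]; ring
  · have : coeff m f = 0 := coeff_eq_zero_of_totalDegree_lt (lt_of_le_of_lt hf h)
    rw [this]; simp

/-- The polynomial identity behind the symmetry of `specP`: `specP μ f * g + gammaP f g` is a sum
of terms `(1-‖x‖²)∂_i h - 2(μ+1) x_i h` with `h = g ∂_i f`, and of angular terms `x_j ∂_i h_{ij}`
with `h_{ij}` antisymmetric in `i, j`. Each of the two sums has zero integral against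
`(1-‖x‖²)^μ`. -/
lemma specP_mul_add_gammaP (μ : ℝ) (f g : MvPolynomial (Fin d) ℝ) :
    specP μ f * g + gammaP f g =
      (∑ i, ((1 - rsqP d) * pderiv i (g * pderiv i f)
          - C (2 * (μ + 1)) * (X i * (g * pderiv i f))))
        + ∑ i, ∑ j, X j * pderiv i (g * (X j * pderiv i f - X i * pderiv j f)) := by
  have hE : eulerP (eulerP f)
      = eulerP f + ∑ i, ∑ j, X i * X j * pderiv i (pderiv j f) := by
    unfold eulerP
    simp only [map_sum, pderiv_mul, pderiv_X, Finset.mul_sum]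
    rw [← Finset.sum_add_distrib]
    refine Finset.sum_congr rfl fun i _ => ?_
    simp only [mul_add, Finset.sum_add_distrib]
    congr 1
    · simp [Pi.single_apply]
    · exact Finset.sum_congr rfl fun j _ => by ring
  have h1 : ∀ i, ∑ j, X j * pderiv i (g * (X j * pderiv i f - X i * pderiv j f))
      = rsqP d * pderiv i (g * pderiv i f) - X i * pderiv i g * eulerP f
        - g * (∑ j, X i * X j * pderiv i (pderiv j f)) - g * eulerP f
        + g * (X i * pderiv i f) := by
    intro i
    have : ∀ j, X j * pderiv i (g * (X j * pderiv i f - X i * pderiv j f))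
        = X j ^ 2 * pderiv i (g * pderiv i f) - X i * pderiv i g * (X j * pderiv j f)
          - g * (X i * X j * pderiv i (pderiv j f)) - g * (X j * pderiv j f)
          + g * (X j * pderiv i f * pderiv i (X j)) := by
      intro j
      simp only [pderiv_mul, map_sub, pderiv_X_self]
      ring
    simp only [this, Finset.sum_add_distrib, Finset.sum_sub_distrib, ← Finset.mul_sum,
      ← Finset.sum_mul]
    simp [rsqP, eulerP, pderiv_X, Pi.single_apply]
  have h2 : ∑ i, X i * pderiv i g * eulerP f = eulerP g * eulerP f := by
    rw [← Finset.sum_mul]; rfl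
  have h3 : ∑ i, C (2 * (μ + 1)) * (X i * (g * pderiv i f))
      = C (2 * (μ + 1)) * (g * eulerP f) := by
    rw [eulerP, Finset.mul_sum, Finset.mul_sum]
    exact Finset.sum_congr rfl fun i _ => by ring
  have h4 : ∑ i, pderiv i (g * pderiv i f) = (∑ i, pderiv i f * pderiv i g) + g * lapP f := by
    rw [lapP, Finset.mul_sum, ← Finset.sum_add_distrib]
    exact Finset.sum_congr rfl fun i _ => by rw [pderiv_mul]; ring
  have h5 : ∑ i, g * (X i * pderiv i f) = g * eulerP f := by rw [eulerP, Finset.mul_sum]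
  simp only [h1, Finset.sum_add_distrib, Finset.sum_sub_distrib, h2, h3, h5, ← Finset.mul_sum, h4]
  rw [specP, gammaP, hE]
  simp only [Finset.sum_const, Finset.card_univ, Fintype.card_fin, nsmul_eq_mul]
  have : (C (2 * μ + (d : ℝ)) : MvPolynomial (Fin d) ℝ)
      = C (2 * (μ + 1)) + (d : MvPolynomial (Fin d) ℝ) - 2 := by
    have e : (d : MvPolynomial (Fin d) ℝ) = C (d : ℝ) := (map_natCast C d).symm
    have e2 : (2 : MvPolynomial (Fin d) ℝ) = C (2 : ℝ) := (map_ofNat C 2).symm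
    rw [e, e2, ← C_add, ← C_sub]
    congr 1; ring
  rw [this]
  ring

/-- A positive definite functional on polynomials satisfying the basic integration by parts
formula of the weight `(1-‖x‖²)^μ`. -/
structure IsBallFunctional (μ : ℝ) (L : MvPolynomial (Fin d) ℝ →ₗ[ℝ] ℝ) : Prop where
  parts : ∀ i h, L ((1 - rsqP d) * pderiv i h) = 2 * (μ + 1) * L (X i * h)
  nonneg : ∀ p, 0 ≤ L (p * p)
  eq_zero : ∀ p, L (p * p) = 0 → p = 0

variable {μ : ℝ} {L : MvPolynomial (Fin d) ℝ →ₗ[ℝ] ℝ}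

/-- Green's formula: the energy form is represented by `-specP μ`. -/
lemma IsBallFunctional.energy (hL : IsBallFunctional μ L) (hμ : -1 < μ)
    (f g : MvPolynomial (Fin d) ℝ) : L (gammaP f g) = - L (specP μ f * g) := by
  have key := congrArg L (specP_mul_add_gammaP μ f g)
  have hC : ∀ (c : ℝ) p, L (C c * p) = c * L p := fun c p => by
    rw [← smul_eq_C_mul, map_smul, smul_eq_mul]
  rw [map_add, map_add, map_sum, map_sum] at key
  have z1 : ∀ i, L ((1 - rsqP d) * pderiv i (g * pderiv i f)
      - C (2 * (μ + 1)) * (X i * (g * pderiv i f))) = 0 := fun i => by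
    rw [map_sub, hL.parts, hC, sub_self]
  -- rotational invariance, obtained from commutation of partial derivatives
  have rot : ∀ i j h, L (X j * pderiv i h) = L (X i * pderiv j h) := fun i j h => by
    have a := hL.parts j (pderiv i h)
    have b := hL.parts i (pderiv j h)
    rw [pderiv_pderiv_comm, b] at a
    exact (mul_left_cancel₀ (by linarith) a).symm
  have z2 : ∑ i, L (∑ j, X j * pderiv i (g * (X j * pderiv i f - X i * pderiv j f))) = 0 := by
    have anti : ∑ i, ∑ j, L (X j * pderiv i (g * (X j * pderiv i f - X i * pderiv j f)))
        = - ∑ i, ∑ j, L (X j * pderiv i (g * (X j * pderiv i f - X i * pderiv j f))) := by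
      conv_lhs => rw [Finset.sum_comm]
      simp only [← Finset.sum_neg_distrib]
      refine Finset.sum_congr rfl fun i _ => Finset.sum_congr rfl fun j _ => ?_
      rw [rot j i, ← map_neg]
      congr 1
      rw [← mul_neg, ← map_neg]
      congr 2
      ring
    simp only [map_sum]
    linarith
  simp only [z1, Finset.sum_const_zero, z2] at key
  linarith

lemma gammaP_comm (f g : MvPolynomial (Fin d) ℝ) : gammaP f g = gammaP g f := by
  simp only [gammaP, mul_comm]

lemma gammaP_add_self (f g : MvPolynomial (Fin d) ℝ) :
    gammaP (f + g) (f + g) = gammaP f f + gammaP f g + gammaP f g + gammaP g g := by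
  have : eulerP (f + g) = eulerP f + eulerP g := by
    simp [eulerP, mul_add, Finset.sum_add_distrib]
  simp only [gammaP, this, map_add, add_mul, mul_add, Finset.sum_add_distrib]
  simp only [mul_comm (pderiv _ g) (pderiv _ f)]
  ring

/-- A polynomial splits as an element orthogonal to all polynomials of degree `≤ k` plus a
polynomial of degree `≤ k`. -/
lemma IsBallFunctional.exists_proj (hL : IsBallFunctional μ L) (k : ℕ)
    (f : MvPolynomial (Fin d) ℝ) : ∃ h : MvPolynomial (Fin d) ℝ, h.totalDegree ≤ k ∧
      ∀ q : MvPolynomial (Fin d) ℝ, q.totalDegree ≤ k → L ((f - h) * q) = 0 := by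
  let P := restrictTotalDegree (Fin d) ℝ k
  let φ : MvPolynomial (Fin d) ℝ →ₗ[ℝ] Module.Dual ℝ P :=
    { toFun := fun h => (L ∘ₗ LinearMap.mulLeft ℝ h) ∘ₗ P.subtype
      map_add' := fun a b => by ext; simp [add_mul]
      map_smul' := fun a b => by ext; simp }
  have hinj : Function.Injective (φ ∘ₗ P.subtype) := by
    rw [← LinearMap.ker_eq_bot, LinearMap.ker_eq_bot']
    intro m hm
    have := LinearMap.congr_fun hm m
    exact Subtype.ext (hL.eq_zero _ this)
  have hsurj : Function.Surjective (φ ∘ₗ P.subtype) :=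
    (LinearMap.injective_iff_surjective_of_finrank_eq_finrank
      (Subspace.dual_finrank_eq).symm).mp hinj
  obtain ⟨h, hh⟩ := hsurj (φ f)
  refine ⟨h, (mem_restrictTotalDegree _ _ _).mp h.2, fun q hq => ?_⟩
  have := LinearMap.congr_fun hh ⟨q, (mem_restrictTotalDegree _ _ _).mpr hq⟩
  rw [sub_mul, map_sub, sub_eq_zero]
  exact this.symm

/-- Elements of degree `n` orthogonal to lower degrees are eigenvectors of `specP`. -/
lemma IsBallFunctional.eigen (hL : IsBallFunctional μ L) (hμ : -1 < μ) {n : ℕ} (hn : 0 < n)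
    {g : MvPolynomial (Fin d) ℝ} (hg : g.totalDegree ≤ n)
    (ho : ∀ q : MvPolynomial (Fin d) ℝ, q.totalDegree < n → L (g * q) = 0) :
    specP μ g = - (C ((n : ℝ) * (n + 2 * μ + d)) * g) := by
  have hlow : ∀ q : MvPolynomial (Fin d) ℝ, q.totalDegree < n →
      L ((specP μ g + C ((n : ℝ) * (n + 2 * μ + d)) * g) * q) = 0 := fun q hq => by
    have e1 := hL.energy hμ g q
    rw [gammaP_comm, hL.energy hμ q g, mul_comm, ho _ (totalDegree_specP_lt μ hq)] at e1
    rw [add_mul, map_add, mul_assoc, ← smul_eq_C_mul, map_smul, ho q hq]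
    simp; linarith
  exact eq_neg_of_add_eq_zero_left
    (hL.eq_zero _ (hlow _ (totalDegree_specP_add_lt μ hn hg)))

/-- The sharp inequality for an abstract functional, by induction on the degree: `f` splits as
`g + h` with `g` orthogonal to all lower degrees and `deg h < n`. The energy is diagonal in this
splitting, and the eigenvalues `n(n+2μ+d)` increase strictly with `n`. -/
theorem IsBallFunctional.bernstein (hL : IsBallFunctional μ L) (hμ : -1 < μ) (hd : 2 ≤ d)
    (n : ℕ) : ∀ f : MvPolynomial (Fin d) ℝ, f.totalDegree ≤ n →
    L (gammaP f f) ≤ (n : ℝ) * (n + 2 * μ + d) * L (f * f) ∧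
    (L (gammaP f f) = (n : ℝ) * (n + 2 * μ + d) * L (f * f) ↔
      ∀ q : MvPolynomial (Fin d) ℝ, q.totalDegree < n → L (f * q) = 0) := by
  induction n with
  | zero =>
    intro f hf
    have hfC := (totalDegree_eq_zero_iff_eq_C).mp (Nat.le_zero.mp hf)
    have : gammaP f f = 0 := by
      rw [hfC]; simp [gammaP, eulerP]
    simp [this]
  | succ n ih =>
    intro f hf
    obtain ⟨h, hh, ho⟩ := hL.exists_proj n f
    set g := f - h with hgdef
    have hfg : f = g + h := by rw [hgdef]; ring
    have hg : g.totalDegree ≤ n + 1 :=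
      (totalDegree_sub _ _).trans (max_le hf (hh.trans (Nat.le_succ n)))
    have ho' : ∀ q : MvPolynomial (Fin d) ℝ, q.totalDegree < n + 1 → L (g * q) = 0 :=
      fun q hq => ho q (Nat.lt_succ_iff.mp hq)
    have heig := hL.eigen hμ (Nat.succ_pos n) hg ho'
    set lam : ℝ := ((n + 1 : ℕ) : ℝ) * ((n + 1 : ℕ) + 2 * μ + d) with hlam
    have hB : ∀ q, L (gammaP g q) = lam * L (g * q) := fun q => by
      rw [hL.energy hμ, heig, neg_mul, map_neg, neg_neg, mul_assoc, ← smul_eq_C_mul, map_smul,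
        smul_eq_mul]
    have hgh : L (g * h) = 0 := ho h hh
    have e1 : L (gammaP f f) = lam * L (g * g) + L (gammaP h h) := by
      rw [hfg, gammaP_add_self, map_add, map_add, map_add, hB, hB, hgh]; ring
    have e2 : L (f * f) = L (g * g) + L (h * h) := by
      have : f * f = g * g + g * h + g * h + h * h := by rw [hfg]; ring
      rw [this, map_add, map_add, map_add, hgh]; ring
    have hi := (ih h hh).1
    have hgap : (n : ℝ) * (n + 2 * μ + d) < lam := by
      have : (2 : ℝ) ≤ d := by exact_mod_cast hd
      have hn0 : (0 : ℝ) ≤ n := Nat.cast_nonneg n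
      rw [hlam]; push_cast; nlinarith
    have hhn := hL.nonneg h
    refine ⟨by rw [e1, e2]; nlinarith, fun heq q hq => ?_, fun hort => ?_⟩
    · rw [e1, e2] at heq
      have : L (h * h) = 0 := by
        by_contra hne
        have : 0 < L (h * h) := lt_of_le_of_ne hhn (Ne.symm hne)
        nlinarith
      have h0 := hL.eq_zero _ this
      rw [hfg, h0, add_zero]
      exact ho' q hq
    · have : L (h * h) = 0 := by
        have a := hort h (Nat.lt_succ_iff.mpr hh)
        rw [hfg, add_mul, map_add, hgh, zero_add] at a
        exact a
      have h0 := hL.eq_zero _ this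
      have : gammaP (0 : MvPolynomial (Fin d) ℝ) 0 = 0 := by simp [gammaP, eulerP]
      rw [e1, e2, h0, this]; simp

end Algebra

/-! ### The weighted integral on the ball -/

section Analysis

variable {d : ℕ}

lemma eunorm_sq (x : Fin d → ℝ) : eunorm x ^ 2 = ∑ i, x i ^ 2 :=
  Real.sq_sqrt (Finset.sum_nonneg fun i _ => sq_nonneg _)

lemma continuous_eunorm : Continuous (eunorm : (Fin d → ℝ) → ℝ) := by
  unfold eunorm; fun_prop

lemma eunorm_nonneg (x : Fin d → ℝ) : 0 ≤ eunorm x := Real.sqrt_nonneg _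

lemma eunorm_eq_norm (x : EuclideanSpace ℝ (Fin d)) : eunorm (WithLp.ofLp x) = ‖x‖ := by
  simp [eunorm, EuclideanSpace.norm_eq]

lemma mem_Bd_iff (x : Fin d → ℝ) : x ∈ Bd d ↔ ∑ i, x i ^ 2 ≤ 1 := by
  rw [← eunorm_sq]
  exact (sq_le_one_iff₀ (eunorm_nonneg x)).symm

lemma isCompact_Bd : IsCompact (Bd d) := by
  refine Metric.isCompact_of_isClosed_isBounded
    (isClosed_le continuous_eunorm continuous_const) ?_
  refine (Metric.isBounded_closedBall (x := (0 : Fin d → ℝ)) (r := 1)).subset fun x hx => ?_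
  rw [mem_closedBall_zero_iff, pi_norm_le_iff_of_nonneg zero_le_one]
  intro i
  rw [mem_Bd_iff] at hx
  rw [Real.norm_eq_abs, ← sq_le_one_iff_abs_le_one]
  exact (Finset.single_le_sum (f := fun i => x i ^ 2) (fun _ _ => sq_nonneg _)
    (Finset.mem_univ i)).trans hx

lemma measurableSet_Bd : MeasurableSet (Bd d) := isCompact_Bd.measurableSet

lemma measurable_Wmu (μ : ℝ) : Measurable (Wmu d μ) := by
  have := (continuous_eunorm (d := d)).measurable
  unfold Wmu
  exact (measurable_const.sub (this.pow_const 2)).pow_const μ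

lemma Wmu_nonneg (μ : ℝ) {x : Fin d → ℝ} (hx : x ∈ Bd d) : 0 ≤ Wmu d μ x := by
  rw [mem_Bd_iff, ← eunorm_sq] at hx
  exact Real.rpow_nonneg (by linarith) _

/-- The weight is integrable since `μ > -1`; the proof uses polar coordinates. -/
lemma integrableOn_Wmu (hd : 0 < d) {μ : ℝ} (hμ : -1 < μ) :
    IntegrableOn (Wmu d μ) (Bd d) := by
  have : Nonempty (Fin d) := ⟨⟨0, hd⟩⟩
  let F : ℝ → ℝ := (Set.Iic 1).indicator fun r => (1 - r ^ 2) ^ μ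
  have hF : Integrable (fun x : EuclideanSpace ℝ (Fin d) => F ‖x‖) := by
    rw [integrable_fun_norm_addHaar (volume : Measure (EuclideanSpace ℝ (Fin d)))]
    have h1 : IntegrableOn (fun y : ℝ => (1 - y) ^ μ) (Set.Icc 0 1) := by
      have := (intervalIntegral.intervalIntegrable_rpow' (a := 1) (b := 0) hμ).comp_sub_left 1
      simp only [sub_self, sub_zero] at this
      exact (intervalIntegrable_iff_integrableOn_Icc_of_le zero_le_one).mp this
    set k := Module.finrank ℝ (EuclideanSpace ℝ (Fin d)) - 1
    have h2 : IntegrableOn (fun y : ℝ => (y ^ k * (1 + y) ^ μ) * (1 - y) ^ μ) (Set.Icc 0 1) := by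
      refine h1.continuousOn_mul ?_ isCompact_Icc
      refine (continuousOn_id.pow _).mul (ContinuousOn.rpow_const (by fun_prop) fun y hy => ?_)
      left; have := hy.1; positivity
    have h3 : IntegrableOn (fun y : ℝ => y ^ k • F y) (Set.Icc 0 1) := by
      refine h2.congr_fun (fun y hy => ?_) measurableSet_Icc
      have e : (1 - y ^ 2) = (1 + y) * (1 - y) := by ring
      simp only [F, Set.indicator_of_mem (Set.mem_Iic.mpr hy.2), smul_eq_mul, e]
      rw [Real.mul_rpow (by linarith [hy.1]) (by linarith [hy.2])]
      ring
    refine h3.of_forall_sdiff_eq_zero measurableSet_Ioi fun y hy => ?_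
    have : y ∉ Set.Iic 1 := fun h => hy.2 ⟨le_of_lt hy.1, h⟩
    simp [F, Set.indicator_of_notMem this]
  have hG : Integrable ((Bd d).indicator (Wmu d μ)) := by
    rw [← (PiLp.volume_preserving_ofLp (Fin d)).integrable_comp_emb
      (MeasurableEquiv.toLp 2 (Fin d → ℝ)).symm.measurableEmbedding]
    convert! hF using 2 with x
    simp only [Function.comp, F, Set.indicator, Bd, Set.mem_ofPred_eq, eunorm_eq_norm,
      Set.mem_Iic, Wmu]
  exact (integrable_indicator_iff measurableSet_Bd).mp hG

lemma integrableOn_eval_mul_Wmu (hd : 0 < d) {μ : ℝ} (hμ : -1 < μ)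
    (p : MvPolynomial (Fin d) ℝ) :
    IntegrableOn (fun x => eval x p * Wmu d μ x) (Bd d) :=
  (integrableOn_Wmu hd hμ).continuousOn_mul (MvPolynomial.continuous_eval p).continuousOn
    isCompact_Bd

/-- The functional `p ↦ ∫_{B^d} p W_μ` on polynomials. -/
def ballFunctional (hd : 0 < d) {μ : ℝ} (hμ : -1 < μ) : MvPolynomial (Fin d) ℝ →ₗ[ℝ] ℝ where
  toFun p := ∫ x in Bd d, eval x p * Wmu d μ x
  map_add' p q := by
    rw [← integral_add (integrableOn_eval_mul_Wmu hd hμ p) (integrableOn_eval_mul_Wmu hd hμ q)]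
    simp only [map_add, add_mul]
  map_smul' c p := by
    simp only [smul_eval, mul_assoc, integral_const_mul, RingHom.id_apply, smul_eq_mul]

lemma hasDerivAt_eval_insertNth {n : ℕ} (i : Fin (n + 1)) (y : Fin n → ℝ)
    (p : MvPolynomial (Fin (n + 1)) ℝ) (t : ℝ) :
    HasDerivAt (fun t => eval (i.insertNth t y : Fin (n + 1) → ℝ) p)
      (eval (i.insertNth t y : Fin (n + 1) → ℝ) (pderiv i p)) t := by
  induction p using MvPolynomial.induction_on with
  | C a => simpa using hasDerivAt_const t a
  | add p q hp hq => simpa using hp.fun_add hq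
  | mul_X p j hp =>
    have hX : HasDerivAt (fun t => eval (i.insertNth t y : Fin (n + 1) → ℝ) (X j))
        (eval (i.insertNth t y : Fin (n + 1) → ℝ) (pderiv i (X j))) t := by
      rcases Fin.eq_self_or_eq_succAbove i j with rfl | ⟨k, rfl⟩
      · simpa using hasDerivAt_id' t
      · rw [pderiv_X_of_ne (Fin.succAbove_ne i k)]
        simpa using hasDerivAt_const t (y k)
    have := hp.mul hX
    simp only [map_mul, pderiv_mul, map_add]
    exact this

/-- Along a line parallel to a coordinate axis the integrand of the integration by parts formula
is the derivative of `h (1-‖x‖²)^(μ+1)`, which vanishes at both ends of the chord. -/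
lemma integral_slice_eq_zero {n : ℕ} {μ : ℝ} (hμ : -1 < μ) (i : Fin (n + 1)) (y : Fin n → ℝ)
    (h : MvPolynomial (Fin (n + 1)) ℝ) :
    ∫ t : ℝ, (Bd (n + 1)).indicator (fun x => eval x ((1 - rsqP (n + 1)) * pderiv i h
      - C (2 * (μ + 1)) * (X i * h)) * Wmu (n + 1) μ x) (i.insertNth t y) = 0 := by
  set G : (Fin (n + 1) → ℝ) → ℝ := fun x => eval x ((1 - rsqP (n + 1)) * pderiv i h
      - C (2 * (μ + 1)) * (X i * h)) * Wmu (n + 1) μ x with hG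
  set c : ℝ := 1 - ∑ j, y j ^ 2 with hc
  have hsum : ∀ t : ℝ, ∑ j, (i.insertNth t y : Fin (n + 1) → ℝ) j ^ 2 = t ^ 2 + ∑ j, y j ^ 2 :=
    fun t => by rw [Fin.sum_univ_succAbove _ i]; simp
  have hmem : ∀ t : ℝ, (i.insertNth t y : Fin (n + 1) → ℝ) ∈ Bd (n + 1) ↔ t ^ 2 ≤ c := fun t => by
    rw [mem_Bd_iff, hsum]
    constructor <;> intro <;> linarith
  have hW : ∀ t : ℝ, Wmu (n + 1) μ (i.insertNth t y) = (c - t ^ 2) ^ μ := fun t => by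
    rw [Wmu, eunorm_sq, hsum]; congr 1; rw [hc]; ring
  by_cases hInt : Integrable fun t : ℝ => (Bd (n + 1)).indicator G (i.insertNth t y)
  swap
  -- a non-integrable slice has integral `0` by convention
  · exact integral_undef hInt
  rcases lt_or_ge c 0 with hneg | hpos
  · have : ∀ t : ℝ, (Bd (n + 1)).indicator G (i.insertNth t y) = 0 := fun t => by
      refine Set.indicator_of_notMem (fun hm => ?_) _
      have := (hmem t).mp hm
      nlinarith [sq_nonneg t]
    simp [this]
  set s := √c with hs
  have hs0 : 0 ≤ s := Real.sqrt_nonneg _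
  have hs2 : s ^ 2 = c := Real.sq_sqrt hpos
  have hset : ∀ t : ℝ, (i.insertNth t y : Fin (n + 1) → ℝ) ∈ Bd (n + 1) ↔ t ∈ Set.Icc (-s) s :=
    fun t => by rw [hmem, ← hs2, Set.mem_Icc, ← abs_le, sq_le_sq, abs_of_nonneg hs0]
  have hind : (fun t : ℝ => (Bd (n + 1)).indicator G (i.insertNth t y))
      = (Set.Icc (-s) s).indicator fun t => G (i.insertNth t y) := by
    ext t
    by_cases ht : t ∈ Set.Icc (-s) s
    · rw [Set.indicator_of_mem ht, Set.indicator_of_mem ((hset t).mpr ht)]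
    · rw [Set.indicator_of_notMem ht, Set.indicator_of_notMem fun hh => ht ((hset t).mp hh)]
  rw [hind] at hInt ⊢
  rw [integral_indicator measurableSet_Icc, integral_Icc_eq_integral_Ioc,
    ← intervalIntegral.integral_of_le (by linarith)]
  have hcont : Continuous fun t : ℝ => eval (i.insertNth t y : Fin (n + 1) → ℝ) h :=
    continuous_iff_continuousAt.mpr fun t => (hasDerivAt_eval_insertNth i y h t).continuousAt
  rw [intervalIntegral.integral_eq_sub_of_hasDerivAt_of_le (by linarith)
    (f := fun t => eval (i.insertNth t y : Fin (n + 1) → ℝ) h * (c - t ^ 2) ^ (μ + 1))]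
  · simp only [even_two, Even.neg_pow, hs2, sub_self, Real.zero_rpow (by linarith : μ + 1 ≠ 0)]
    ring
  · exact (hcont.mul (Continuous.rpow_const (by fun_prop)
      fun t => Or.inr (by linarith))).continuousOn
  · intro t ht
    have hlt : 0 < c - t ^ 2 := by
      have := abs_lt.mpr ht
      have := sq_lt_sq' ht.1 ht.2
      linarith
    have h1 : HasDerivAt (fun t : ℝ => c - t ^ 2) (-(2 * t)) t := by
      simpa using (hasDerivAt_pow 2 t).const_sub c
    have h2 := (hasDerivAt_eval_insertNth i y h t).mul
      (h1.rpow_const (p := μ + 1) (Or.inl hlt.ne'))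
    convert! h2 using 1
    simp only [hG, hW, map_sub, map_mul, map_one, eval_C, eval_X, rsqP, map_sum, map_pow, hsum,
      Fin.insertNth_apply_same, add_sub_cancel_right]
    rw [Real.rpow_add_one hlt.ne', show 1 - (t ^ 2 + ∑ j, y j ^ 2) = c - t ^ 2 by rw [hc]; ring]
    ring
  · rw [intervalIntegrable_iff_integrableOn_Icc_of_le (by linarith)]
    exact (integrable_indicator_iff measurableSet_Icc).mp hInt

/-- Integration by parts for the weight `(1-‖x‖²)^μ`, obtained from the slices by Fubini. -/
lemma ballFunctional_parts (hd : 0 < d) {μ : ℝ} (hμ : -1 < μ) (i : Fin d)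
    (h : MvPolynomial (Fin d) ℝ) :
    ballFunctional hd hμ ((1 - rsqP d) * pderiv i h)
      = 2 * (μ + 1) * ballFunctional hd hμ (X i * h) := by
  obtain ⟨n, rfl⟩ : ∃ n, d = n + 1 := ⟨d - 1, by omega⟩
  rw [← sub_eq_zero, ← smul_eq_mul (2 * (μ + 1)), ← map_smul, ← map_sub, smul_eq_C_mul]
  change ∫ x in Bd (n + 1), _ = 0
  have hi := integrableOn_eval_mul_Wmu hd hμ
    ((1 - rsqP (n + 1)) * pderiv i h - C (2 * (μ + 1)) * (X i * h))
  rw [← integrable_indicator_iff measurableSet_Bd] at hi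
  rw [← integral_indicator measurableSet_Bd]
  have hmp := (volume_preserving_piFinSuccAbove (fun _ : Fin (n + 1) => ℝ) i).symm
  rw [← hmp.integrable_comp_emb (MeasurableEquiv.measurableEmbedding _)] at hi
  rw [← hmp.integral_comp', Measure.volume_eq_prod, integral_prod_symm]
  · exact integral_eq_zero_of_ae (Filter.Eventually.of_forall fun y =>
      integral_slice_eq_zero hμ i y h)
  · exact hi

lemma ballFunctional_isBallFunctional (hd : 0 < d) {μ : ℝ} (hμ : -1 < μ) :
    IsBallFunctional μ (ballFunctional (d := d) hd hμ) where
  parts := ballFunctional_parts hd hμ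
  nonneg p := setIntegral_nonneg measurableSet_Bd fun x hx => by
    rw [map_mul]; exact mul_nonneg (mul_self_nonneg _) (Wmu_nonneg μ hx)
  eq_zero p hp := by
    change ∫ x in Bd d, eval x (p * p) * Wmu d μ x = 0 at hp
    rw [setIntegral_eq_zero_iff_of_nonneg_ae _ (integrableOn_eval_mul_Wmu hd hμ _)] at hp
    swap
    · filter_upwards [ae_restrict_mem measurableSet_Bd] with x hx
      rw [map_mul]; exact mul_nonneg (mul_self_nonneg _) (Wmu_nonneg μ hx)
    let U : Set (Fin d → ℝ) := {x | ∑ i, x i ^ 2 < 1}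
    have hU : IsOpen U := isOpen_lt (by fun_prop) continuous_const
    have hUB : U ⊆ Bd d := fun x hx => (mem_Bd_iff x).mpr (le_of_lt hx)
    have hae : (fun x => eval x p) =ᵐ[volume.restrict U] fun _ => 0 := by
      filter_upwards [ae_restrict_of_ae_restrict_of_subset hUB hp,
        ae_restrict_mem hU.measurableSet] with x hx hxU
      have hW : 0 < Wmu d μ x := Real.rpow_pos_of_pos (by
        rw [eunorm_sq]; exact sub_pos.mpr hxU) _
      simpa [hW.ne'] using hx
    have hEq := Measure.eqOn_open_of_ae_eq hae hU
      (MvPolynomial.continuous_eval p).continuousOn continuousOn_const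
    have hd' : (0 : ℝ) < d := by exact_mod_cast hd
    have hd1 : (1 : ℝ) ≤ d := by exact_mod_cast hd
    have : Nonempty (Fin d) := ⟨⟨0, hd⟩⟩
    -- the box `(0, 1/d)^d` lies inside the open unit ball
    refine MvPolynomial.funext_set (fun _ => Set.Ioo (0 : ℝ) (1 / d))
      (fun _ => Set.Ioo_infinite (by positivity)) fun x hx => ?_
    rw [map_zero]
    refine hEq ?_
    change ∑ i, x i ^ 2 < 1
    calc ∑ i, x i ^ 2 < ∑ _i : Fin d, (1 / d : ℝ) := by
          refine Finset.sum_lt_sum_of_nonempty Finset.univ_nonempty fun i _ => ?_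
          have h := hx i trivial
          have h1 : x i < 1 := h.2.trans_le ((div_le_one hd').mpr hd1)
          nlinarith [h.1, h.2]
      _ = 1 := by simp [hd'.ne']

/-- Lagrange's identity. -/
lemma lagrange_identity (a b : Fin d → ℝ) :
    ∑ i, ∑ j ∈ Finset.Ioi i, (a i * b j - a j * b i) ^ 2
      = (∑ i, a i ^ 2) * (∑ i, b i ^ 2) - (∑ i, a i * b i) ^ 2 := by
  have h1 := Finset.sum_sum_Ioi_add_eq_sum_sum_off_diag
    fun i j : Fin d => (a i * b j - a j * b i) ^ 2
  have h2 : ∀ i, ∑ j ∈ {i}ᶜ, (a j * b i - a i * b j) ^ 2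
      = ∑ j, (a j * b i - a i * b j) ^ 2 := fun i => by
    rw [← Finset.sum_add_sum_compl {i}]; simp
  have h3 : ∑ i, ∑ j, (a j * b i - a i * b j) ^ 2
      = 2 * ((∑ i, a i ^ 2) * (∑ i, b i ^ 2) - (∑ i, a i * b i) ^ 2) := by
    have : ∀ i j, (a j * b i - a i * b j) ^ 2
        = b i ^ 2 * a j ^ 2 + a i ^ 2 * b j ^ 2 - 2 * ((a i * b i) * (a j * b j)) :=
      fun i j => by ring
    simp only [this, Finset.sum_sub_distrib, Finset.sum_add_distrib, ← Finset.mul_sum,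
      ← Finset.sum_mul]
    ring
  simp only [h2, h3] at h1
  have h4 : ∑ i, ∑ j ∈ Finset.Ioi i, ((a j * b i - a i * b j) ^ 2 + (a i * b j - a j * b i) ^ 2)
      = 2 * ∑ i, ∑ j ∈ Finset.Ioi i, (a i * b j - a j * b i) ^ 2 := by
    simp only [Finset.mul_sum]
    exact Finset.sum_congr rfl fun i _ => Finset.sum_congr rfl fun j _ => by ring
  linarith

/-- Away from the origin, radial and angular parts add up to `|∇f|² - (⟨x,∇⟩f)²`. -/
lemma pointwise_identity (f : MvPolynomial (Fin d) ℝ) {x : Fin d → ℝ} (hx : x ∈ Bd d)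
    (h0 : eunorm x ≠ 0) :
    (√(1 - eunorm x ^ 2) / eunorm x * ∑ i, x i * evalP (pderiv i f) x) ^ 2
      + ∑ i, ∑ j ∈ Finset.Ioi i, (evalP (Dpoly i j f) x / eunorm x) ^ 2
      = eval x (gammaP f f) := by
  have hr : 0 ≤ 1 - eunorm x ^ 2 := by
    rw [mem_Bd_iff, ← eunorm_sq] at hx; linarith
  have hlag := lagrange_identity x fun i => evalP (pderiv i f) x
  have hD : ∀ i j, evalP (Dpoly i j f) x
      = x i * evalP (pderiv j f) x - x j * evalP (pderiv i f) x := fun i j => by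
    simp [evalP, Dpoly]
  have hg : eval x (gammaP f f) = ∑ i, evalP (pderiv i f) x ^ 2
      - (∑ i, x i * evalP (pderiv i f) x) ^ 2 := by
    simp [gammaP, eulerP, evalP, sq]
  simp only [hD, div_pow, mul_pow, Real.sq_sqrt hr, hg, ← Finset.sum_div]
  rw [hlag, ← eunorm_sq]
  field_simp
  ring

/-- The left side of the Bernstein inequality is the energy of `f`. -/
lemma lhs_eq_ballFunctional (hd : 0 < d) {μ : ℝ} (hμ : -1 < μ) (f : MvPolynomial (Fin d) ℝ) :
    sqNormMu d μ (fun x => √(1 - eunorm x ^ 2) / eunorm x * ∑ i, x i * evalP (pderiv i f) x)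
      + ∑ i, ∑ j ∈ Finset.Ioi i, sqNormMu d μ (fun x => evalP (Dpoly i j f) x / eunorm x)
      = ballFunctional hd hμ (gammaP f f) := by
  have : Nonempty (Fin d) := ⟨⟨0, hd⟩⟩
  have hne : ∀ᵐ x ∂(volume.restrict (Bd d)), eunorm x ≠ 0 := by
    refine ae_restrict_of_ae ?_
    filter_upwards [compl_mem_ae_iff.mpr (measure_singleton (0 : Fin d → ℝ))] with x hx h0
    refine hx ?_
    have := eunorm_sq x
    rw [h0, zero_pow two_ne_zero, eq_comm, Finset.sum_eq_zero_iff_of_nonneg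
      fun i _ => sq_nonneg _] at this
    exact funext fun i => by simpa using this i (Finset.mem_univ i)
  have hmem := ae_restrict_mem (μ := volume) (measurableSet_Bd (d := d))
  have mE : Measurable (eunorm : (Fin d → ℝ) → ℝ) := continuous_eunorm.measurable
  have mP : ∀ p : MvPolynomial (Fin d) ℝ, Measurable (evalP p) :=
    fun p => (MvPolynomial.continuous_eval p).measurable
  have mW := measurable_Wmu (d := d) μ
  have hΓ := integrableOn_eval_mul_Wmu hd hμ (gammaP f f)
  have hDnn : ∀ x i j, 0 ≤ (evalP (Dpoly i j f) x / eunorm x) ^ 2 := fun _ _ _ => sq_nonneg _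
  have iA : IntegrableOn (fun x => (√(1 - eunorm x ^ 2) / eunorm x *
      ∑ i, x i * evalP (pderiv i f) x) ^ 2 * Wmu d μ x) (Bd d) := by
    refine Integrable.mono' hΓ (Measurable.aestronglyMeasurable (by fun_prop)) ?_
    filter_upwards [hne, hmem] with x h0 hx
    rw [Real.norm_of_nonneg (mul_nonneg (sq_nonneg _) (Wmu_nonneg μ hx))]
    refine mul_le_mul_of_nonneg_right ?_ (Wmu_nonneg μ hx)
    rw [← pointwise_identity f hx h0]
    exact le_add_of_nonneg_right
      (Finset.sum_nonneg fun i _ => Finset.sum_nonneg fun j _ => hDnn x i j)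
  have iD : ∀ i, ∀ j ∈ Finset.Ioi i,
      IntegrableOn (fun x => (evalP (Dpoly i j f) x / eunorm x) ^ 2 * Wmu d μ x) (Bd d) := by
    intro i j hj
    refine Integrable.mono' hΓ (Measurable.aestronglyMeasurable (by fun_prop)) ?_
    filter_upwards [hne, hmem] with x h0 hx
    rw [Real.norm_of_nonneg (mul_nonneg (sq_nonneg _) (Wmu_nonneg μ hx))]
    refine mul_le_mul_of_nonneg_right ?_ (Wmu_nonneg μ hx)
    rw [← pointwise_identity f hx h0]
    refine le_add_of_nonneg_of_le (sq_nonneg _) ?_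
    refine le_trans ?_ (Finset.single_le_sum (f := fun i => ∑ j ∈ Finset.Ioi i,
      (evalP (Dpoly i j f) x / eunorm x) ^ 2)
      (fun i _ => Finset.sum_nonneg fun j _ => hDnn x i j) (Finset.mem_univ i))
    exact Finset.single_le_sum (f := fun j => (evalP (Dpoly i j f) x / eunorm x) ^ 2)
      (fun j _ => hDnn x i j) hj
  unfold sqNormMu
  have hin : ∀ i, ∑ j ∈ Finset.Ioi i, ∫ x in Bd d,
      (evalP (Dpoly i j f) x / eunorm x) ^ 2 * Wmu d μ x
      = ∫ x in Bd d, ∑ j ∈ Finset.Ioi i, (evalP (Dpoly i j f) x / eunorm x) ^ 2 * Wmu d μ x :=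
    fun i => (integral_finsetSum _ (iD i)).symm
  simp only [hin]
  rw [← integral_finsetSum _ fun i _ => integrable_finsetSum _ (iD i),
    ← integral_add iA (integrable_finsetSum _ fun i _ => integrable_finsetSum _ (iD i))]
  refine integral_congr_ae ?_
  filter_upwards [hne, hmem] with x h0 hx
  rw [← pointwise_identity f hx h0, add_mul, Finset.sum_mul]
  simp only [Finset.sum_mul]

end Analysis

/-- the sharp `L²(W_μ,B^d)` Bernstein inequality
`‖(√(1−‖x‖²)/‖x‖)⟨x,∇⟩f‖²_{μ,2} + Σ_{i<j} ‖‖x‖^{−1} D_{i,j} f‖²_{μ,2}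
  ≤ n(n+2μ+d)‖f‖²_{μ,2}`, with equality iff `f ∈ 𝒱_n(W_μ,B^d)`. -/
theorem stmt7 (d : ℕ) (hd : 2 ≤ d) (μ : ℝ) (hμ : -1 < μ) (n : ℕ)
    (f : MvPolynomial (Fin d) ℝ) (hf : f.totalDegree ≤ n) :
    ((sqNormMu d μ (fun x => Real.sqrt (1 - eunorm x ^ 2) / eunorm x *
          ∑ i, x i * evalP (pderiv i f) x))
        + ∑ i, ∑ j ∈ Finset.Ioi i,
            sqNormMu d μ (fun x => evalP (Dpoly i j f) x / eunorm x)
      ≤ (n : ℝ) * ((n : ℝ) + 2 * μ + d) * sqNormMu d μ (evalP f))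
    ∧ (((sqNormMu d μ (fun x => Real.sqrt (1 - eunorm x ^ 2) / eunorm x *
          ∑ i, x i * evalP (pderiv i f) x))
        + ∑ i, ∑ j ∈ Finset.Ioi i,
            sqNormMu d μ (fun x => evalP (Dpoly i j f) x / eunorm x)
      = (n : ℝ) * ((n : ℝ) + 2 * μ + d) * sqNormMu d μ (evalP f)) ↔ memV d μ n f) := by
  have hd0 : 0 < d := by omega
  have hL := ballFunctional_isBallFunctional (d := d) hd0 hμ
  have hsq : sqNormMu d μ (evalP f) = ballFunctional hd0 hμ (f * f) := by
    change ∫ x in Bd d, evalP f x ^ 2 * Wmu d μ x = ∫ x in Bd d, eval x (f * f) * Wmu d μ x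
    simp only [evalP, map_mul, sq]
  have hV : memV d μ n f ↔ ∀ q : MvPolynomial (Fin d) ℝ, q.totalDegree < n →
      ballFunctional hd0 hμ (f * q) = 0 := by
    have : ∀ q, ballFunctional hd0 hμ (f * q)
        = ∫ x in Bd d, evalP f x * evalP q x * Wmu d μ x := fun q => by
      change ∫ x in Bd d, eval x (f * q) * Wmu d μ x = _
      simp only [evalP, map_mul]
    simp only [memV, hf, true_and, this]
  rw [lhs_eq_ballFunctional hd0 hμ, hsq, hV]
  exact hL.bernstein hμ hd n f hf

end
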